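/- Let S be a pseudo-symmetric numerical semigroup minimally generated by four elements n_1, n_2, n_3, n_4, let k be a field, and suppose that I_S is generated by G = {f_1 = x_1^{c_1} − x_3 x_4^{c_4−1}, f_2 = x_2^{c_2} − x_1^{c_{21}} x_4, f_3 = x_3^{c_3} − x_1^{c_1−c_{21}−1} x_2, f_4 = x_4^{c_4} − x_1 x_2^{c_2−1} x_3^{c_3−1}, f_5 = x_3^{c_3−1} x_1^{c_{21}+1} − x_2 x_4^{c_4−1}} for positive integers c_1, c_2, c_3, c_4 and 0 < c_{21} < c_1 (Komeda's presentation). Then: (1) AP(S,n_1) is a homogeneous set; (2) for each i ∈ {2,3,4}, AP(S,n_i) is homogeneous if and only if the set {c_{i−1}·n_{i−1}} ∩ AP(S,n_i) is homogeneous, i.e. either c_{i−1}·n_{i−1} ∉ AP(S,n_i) or all factorizations of c_{i−1}·n_{i−1} have the same length; (3) for each i ∈ {2,3,4}, if the binomial f_{i−1} is homogeneous then AP(S,n_i) is homogeneous. -/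

import Mathlib

open scoped BigOperators

/-- The value `Σ aᵢ nᵢ` of a tuple of coefficients `a` w.r.t. the generators `n`. -/
def sval {d : ℕ} (n : Fin d → ℕ) (a : Fin d → ℕ) : ℕ := ∑ i, a i * n i

/-- The total length `Σ aᵢ` of a factorization. -/
def tlen {d : ℕ} (a : Fin d → ℕ) : ℕ := ∑ i, a i

/-- The submonoid of `ℕ` generated by `n`. -/
def gen {d : ℕ} (n : Fin d → ℕ) : Set ℕ := {s : ℕ | ∃ a : Fin d → ℕ, s = sval n a}

/-- The Apéry set of the semigroup generated by `n` with respect to `s`: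
elements `x` of the semigroup such that `x - s` is not in the semigroup. -/
def Apery {d : ℕ} (n : Fin d → ℕ) (s : ℕ) : Set ℕ :=
  {x : ℕ | x ∈ gen n ∧ ¬ ∃ y ∈ gen n, x = s + y}

/-- A subset `T` is homogeneous if every nonzero element of `T` has all its
factorizations of the same length. -/
def HomogSet {d : ℕ} (n : Fin d → ℕ) (T : Set ℕ) : Prop :=
  ∀ t ∈ T, t ≠ 0 → ∀ a b : Fin d → ℕ, sval n a = t → sval n b = t → tlen a = tlen b

/-- The order of `s`: the maximal length of a factorization of `s`. -/
noncomputable def ordS {d : ℕ} (n : Fin d → ℕ) (s : ℕ) : ℕ :=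
  sSup {l : ℕ | ∃ a : Fin d → ℕ, sval n a = s ∧ tlen a = l}

/-- The torsion set of the semigroup generated by `n`, with respect to the
generator of index `i0` (the smallest generator). -/
noncomputable def Torsion {d : ℕ} (n : Fin d → ℕ) (i0 : Fin d) : Set ℕ :=
  {s : ℕ | s ∈ gen n ∧ ∃ c : ℕ, 0 < c ∧ ordS n s + c < ordS n (s + c * n i0)}

/-- `n` is a minimal system of generators: any expression of a generator as a
nonnegative combination of the generators has total coefficient sum one. -/
def MinGen {d : ℕ} (n : Fin d → ℕ) : Prop :=
  ∀ r : Fin d, ∀ a : Fin d → ℕ, n r = sval n a → tlen a = 1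

/-- `n` generates a numerical semigroup (cofinite in `ℕ`). -/
def IsNumerical {d : ℕ} (n : Fin d → ℕ) : Prop := {x : ℕ | x ∉ gen n}.Finite

/-- The monomial `x^a = Π xᵢ^{aᵢ}`. -/
noncomputable def monom (k : Type*) [CommRing k] {d : ℕ} (a : Fin d → ℕ) :
    MvPolynomial (Fin d) k :=
  ∏ i, (MvPolynomial.X i : MvPolynomial (Fin d) k) ^ a i

/-- The toric ideal `I_S`: kernel of `k[x₁,…,x_d] → k[t]`, `xᵢ ↦ t^{nᵢ}`. -/
noncomputable def toricIdeal (k : Type*) [CommRing k] {d : ℕ} (n : Fin d → ℕ) :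
    Ideal (MvPolynomial (Fin d) k) :=
  RingHom.ker (MvPolynomial.aeval (R := k)
    (fun i => (Polynomial.X : Polynomial k) ^ n i)).toRingHom

/-- `E` is a minimal generating set of the ideal `I`: it spans `I` and no
proper subset spans `I`. -/
def IsMinGenSet {R : Type*} [CommRing R] (I : Ideal R) (E : Set R) : Prop :=
  Ideal.span E = I ∧ ∀ E' : Set R, E' ⊂ E → Ideal.span E' ≠ I

/-- Membership of an integer in the semigroup generated by `n`. -/
def memZ {d : ℕ} (n : Fin d → ℕ) (z : ℤ) : Prop := ∃ x ∈ gen n, (x : ℤ) = z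

/-- A numerical semigroup with Frobenius number `F = max (ℤ ∖ S)` is symmetric
if for every integer `z`, `z ∈ S ↔ F - z ∉ S`. -/
def IsSymmetric {d : ℕ} (n : Fin d → ℕ) : Prop :=
  ∃ F : ℤ, ¬ memZ n F ∧ (∀ z : ℤ, F < z → memZ n z) ∧
    ∀ z : ℤ, memZ n z ↔ ¬ memZ n (F - z)

/-- A numerical semigroup with Frobenius number `F = max (ℤ ∖ S)` is
pseudo-symmetric if `F` is even and for every integer `z`,
`z ∈ S ↔ (z ≠ F/2 ∧ F - z ∉ S)`. -/
def IsPseudoSymmetric {d : ℕ} (n : Fin d → ℕ) : Prop :=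
  ∃ F : ℤ, ¬ memZ n F ∧ (∀ z : ℤ, F < z → memZ n z) ∧ F % 2 = 0 ∧
    ∀ z : ℤ, memZ n z ↔ (z ≠ F / 2 ∧ ¬ memZ n (F - z))

/-- The generators `q·m₁,…,q·m_d, p·n₁,…,p·n_e` of the gluing of two numerical
semigroups. -/
def glueGen {d e : ℕ} (mg : Fin d → ℕ) (ng : Fin e → ℕ) (p q : ℕ) :
    Fin (d + e) → ℕ :=
  Fin.append (fun i => q * mg i) (fun i => p * ng i)

/-!
The pairs `(u, v)` of exponents with equal value form the congruence `ker (sval n)` on `ℕ^d`, and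
binomials generating the toric ideal give pairs generating this congruence: map `k[x₁,…,x_d]` to
the monoid algebra of the quotient by the congruence generated by those pairs. If `T` is closed
under taking summands in `S`, then "equal value, and equal length if the value lies in `T`" is
itself a congruence, so `T` is homogeneous as soon as the generating pairs satisfy this condition.

For `T = AP(S, nᵢ)` the condition is void for a pair in which `xᵢ` occurs, because the value of the
pair is then `nᵢ` plus an element of `S`. In Komeda's presentation `x₁` occurs in every `f_j`, and
for `i = 2, 3, 4` the variable `xᵢ` occurs in every `f_j` except `f_{i-1}`; minimality of the
generators rules out the small exponents for which an occurrence would disappear.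
-/

section Factorizations

variable {d : ℕ} {n : Fin d → ℕ}

lemma sval_add (n a b : Fin d → ℕ) : sval n (a + b) = sval n a + sval n b :=
  add_dotProduct a b n

lemma sval_zero (n : Fin d → ℕ) : sval n 0 = 0 :=
  zero_dotProduct n

lemma sval_single (n : Fin d → ℕ) (i : Fin d) (c : ℕ) : sval n (Pi.single i c) = c * n i :=
  single_dotProduct n c i

lemma sval_eq_zero_iff (hn : ∀ i, 0 < n i) {a : Fin d → ℕ} : sval n a = 0 ↔ a = 0 := by
  simp [sval, funext_iff, (hn _).ne']

lemma tlen_add (a b : Fin d → ℕ) : tlen (a + b) = tlen a + tlen b :=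
  Finset.sum_add_distrib

lemma tlen_zero : tlen (0 : Fin d → ℕ) = 0 :=
  Finset.sum_const_zero

lemma tlen_single (i : Fin d) (c : ℕ) : tlen (Pi.single i c : Fin d → ℕ) = c := by
  simp [tlen]

lemma MinGen.pos (hmin : MinGen n) (i : Fin d) : 0 < n i := by
  refine Nat.pos_of_ne_zero fun h => ?_
  have h_len := hmin i 0 (by rw [h, sval_zero])
  simp [tlen_zero] at h_len

lemma MinGen.eq_one_of_eq_mul (hmin : MinGen n) {i j : Fin d} {c : ℕ} (h : n i = c * n j) :
    c = 1 := by
  simpa only [tlen_single] using hmin i (Pi.single j c) (by rw [h, sval_single])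

lemma MinGen.one_lt_of_mul_eq_sval (hmin : MinGen n) {i : Fin d} {c : ℕ} {a : Fin d → ℕ}
    (h : c * n i = sval n a) (ha : 1 < tlen a) : 1 < c := by
  have c_ne_zero : c ≠ 0 := by
    rintro rfl
    rw [zero_mul, eq_comm, sval_eq_zero_iff hmin.pos] at h
    simp [h, tlen_zero] at ha
  have c_ne_one : c ≠ 1 := by
    rintro rfl
    exact ha.ne' (hmin i a (by rw [← h, one_mul]))
  omega

end Factorizations

section Presentations

variable {d : ℕ} {n : Fin d → ℕ} {R : Set ((Fin d → ℕ) × (Fin d → ℕ))}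

/-- The factorization homomorphism `ℕ^d → S` of the semigroup generated by `n`, regarded as a map
to `ℕ`. -/
def svalHom (n : Fin d → ℕ) : (Fin d → ℕ) →+ ℕ where
  toFun := sval n
  map_zero' := sval_zero n
  map_add' := sval_add n

/-- `R` is a presentation of the semigroup generated by `n`: it generates, as a congruence, the
pairs of factorizations with equal value. -/
def IsPresentation (n : Fin d → ℕ) (R : Set ((Fin d → ℕ) × (Fin d → ℕ))) : Prop :=
  AddCon.ker (svalHom n) = addConGen fun u v => (u, v) ∈ R

/-- The ideal generated by the binomials `x^u - x^v` for the pairs `(u, v)` in `R`. -/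
noncomputable def binomialIdeal (k : Type*) [CommRing k]
    (R : Set ((Fin d → ℕ) × (Fin d → ℕ))) : Ideal (MvPolynomial (Fin d) k) :=
  Ideal.span ((fun r => monom k r.1 - monom k r.2) '' R)

lemma monom_eq_monomial (k : Type*) [CommRing k] (a : Fin d → ℕ) :
    monom k a = MvPolynomial.monomial (Finsupp.equivFunOnFinite.symm a) 1 := by
  simp [monom, MvPolynomial.monomial_eq, Finsupp.prod_fintype]

lemma aeval_monom (k : Type*) [CommRing k] (n a : Fin d → ℕ) :
    MvPolynomial.aeval (fun i => (Polynomial.X : Polynomial k) ^ n i) (monom k a) =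
      Polynomial.X ^ sval n a := by
  simp [monom, sval, ← pow_mul, Finset.prod_pow_eq_pow_sum, mul_comm]

lemma monom_sub_monom_mem_toricIdeal_iff (k : Type*) [CommRing k] [Nontrivial k]
    {a b : Fin d → ℕ} : monom k a - monom k b ∈ toricIdeal k n ↔ sval n a = sval n b := by
  change MvPolynomial.aeval (fun i => (Polynomial.X : Polynomial k) ^ n i)
    (monom k a - monom k b) = 0 ↔ _
  rw [map_sub, aeval_monom, aeval_monom, sub_eq_zero]
  exact ⟨fun h => by simpa using congrArg Polynomial.natDegree h, fun h => by rw [h]⟩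

lemma addConGen_of_monom_sub_monom_mem_binomialIdeal (k : Type*) [CommRing k] [Nontrivial k]
    {a b : Fin d → ℕ} (h : monom k a - monom k b ∈ binomialIdeal k R) :
    addConGen (fun u v => (u, v) ∈ R) a b := by
  let C := addConGen fun u v => (u, v) ∈ R
  let π : MvPolynomial (Fin d) k →+* AddMonoidAlgebra k C.Quotient :=
    AddMonoidAlgebra.mapDomainRingHom k (C.mk'.comp Finsupp.coeFnAddHom)
  have π_monom (u : Fin d → ℕ) : π (monom k u) = AddMonoidAlgebra.single (u : C.Quotient) 1 := by
    rw [monom_eq_monomial]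
    exact AddMonoidAlgebra.mapDomain_single
  have π_sub_eq_zero_iff (u v : Fin d → ℕ) : π (monom k u - monom k v) = 0 ↔ C u v := by
    rw [map_sub, π_monom, π_monom, sub_eq_zero,
      AddMonoidAlgebra.single_left_inj one_ne_zero, AddCon.eq]
  have le_ker : binomialIdeal k R ≤ RingHom.ker π := by
    rw [binomialIdeal, Ideal.span_le, Set.image_subset_iff]
    exact fun r hr => (π_sub_eq_zero_iff _ _).2 (AddCon.le_addConGen _ _ hr)
  exact (π_sub_eq_zero_iff a b).1 (le_ker h)

theorem isPresentation_of_toricIdeal_eq (k : Type*) [CommRing k] [Nontrivial k]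
    (hI : toricIdeal k n = binomialIdeal k R) : IsPresentation n R := by
  refine le_antisymm (fun a b hab => ?_) (AddCon.addConGen_le.2 fun u v huv => ?_)
  · refine addConGen_of_monom_sub_monom_mem_binomialIdeal k ?_
    rwa [← hI, monom_sub_monom_mem_toricIdeal_iff]
  · change sval n u = sval n v
    rw [← monom_sub_monom_mem_toricIdeal_iff k, hI]
    exact Ideal.subset_span ⟨(u, v), huv, rfl⟩

lemma IsPresentation.sval_eq (hR : IsPresentation n R) {u v : Fin d → ℕ} (huv : (u, v) ∈ R) :
    sval n u = sval n v :=
  hR.ge (AddCon.le_addConGen _ _ huv)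

end Presentations

section Homogeneity

variable {d : ℕ} {n : Fin d → ℕ} {R : Set ((Fin d → ℕ) × (Fin d → ℕ))} {T : Set ℕ}

/-- `T` contains the summands in the semigroup of each of its elements. Apéry sets have this
property, and it makes the length condition on `T` compatible with addition of factorizations. -/
def SummandClosed (n : Fin d → ℕ) (T : Set ℕ) : Prop :=
  ∀ a b : Fin d → ℕ, sval n (a + b) ∈ T → sval n a ∈ T

lemma summandClosed_apery (n : Fin d → ℕ) (s : ℕ) : SummandClosed n (Apery n s) := by
  refine fun a b hab => ⟨⟨a, rfl⟩, ?_⟩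
  rintro ⟨_, ⟨e, rfl⟩, he⟩
  exact hab.2 ⟨sval n (e + b), ⟨_, rfl⟩, by rw [sval_add, sval_add, he, add_assoc]⟩

lemma sval_notMem_apery {i : Fin d} {u : Fin d → ℕ} (hu : u i ≠ 0) :
    sval n u ∉ Apery n (n i) := by
  have u_eq : Pi.single i 1 + (u - Pi.single i 1) = u := by
    refine add_tsub_cancel_of_le (update_le_iff.2 ⟨Nat.one_le_iff_ne_zero.2 hu, ?_⟩)
    exact fun j _ => Nat.zero_le (u j)
  refine fun h => h.2 ⟨sval n (u - Pi.single i 1), ⟨_, rfl⟩, ?_⟩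
  rw [← one_mul (n i), ← sval_single, ← sval_add, u_eq]

lemma HomogSet.mono {T' : Set ℕ} (hT : HomogSet n T) (h : T' ⊆ T) : HomogSet n T' :=
  fun t ht => hT t (h ht)

lemma HomogSet.tlen_eq (hT : HomogSet n T) (hn : ∀ i, 0 < n i) {u v : Fin d → ℕ}
    (hu : sval n u ∈ T) (huv : sval n u = sval n v) : tlen u = tlen v := by
  by_cases h0 : sval n u = 0
  · rw [(sval_eq_zero_iff hn).1 h0, (sval_eq_zero_iff hn).1 (huv.symm.trans h0)]
  · exact hT _ hu h0 u v rfl huv.symm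

/-- The congruence on factorizations under which `a` and `b` are related if they have equal value
and, when this value lies in `T`, equal length. -/
def SummandClosed.lengthCon (hT : SummandClosed n T) : AddCon (Fin d → ℕ) where
  r a b := sval n a = sval n b ∧ (sval n a ∈ T → tlen a = tlen b)
  iseqv :=
    ⟨fun _ => ⟨rfl, fun _ => rfl⟩,
      fun hab => ⟨hab.1.symm, fun hb => (hab.2 (hab.1 ▸ hb)).symm⟩,
      fun hab hbc => ⟨hab.1.trans hbc.1, fun ha => (hab.2 ha).trans (hbc.2 (hab.1 ▸ ha))⟩⟩
  add' {w x y z} hwx hyz := by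
    refine ⟨by rw [sval_add, sval_add, hwx.1, hyz.1], fun h => ?_⟩
    rw [tlen_add, tlen_add, hwx.2 (hT w y h), hyz.2 (hT y w (add_comm w y ▸ h))]

theorem IsPresentation.homogSet_of_forall (hR : IsPresentation n R) (hT : SummandClosed n T)
    (h : ∀ r ∈ R, sval n r.1 ∈ T → tlen r.1 = tlen r.2) : HomogSet n T := by
  have ker_le : AddCon.ker (svalHom n) ≤ hT.lengthCon := by
    rw [hR, AddCon.addConGen_le]
    exact fun u v huv => ⟨hR.sval_eq huv, h (u, v) huv⟩
  rintro _ ha - a b rfl hb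
  exact (ker_le hb.symm : hT.lengthCon a b).2 ha

/-- The relations of `R` in which the generator of index `i` does not occur; only these matter for
the homogeneity of the Apéry set of that generator. -/
def relationsAvoiding (R : Set ((Fin d → ℕ) × (Fin d → ℕ))) (i : Fin d) :
    Set ((Fin d → ℕ) × (Fin d → ℕ)) :=
  {r ∈ R | r.1 i = 0 ∧ r.2 i = 0}

theorem IsPresentation.homogSet_apery_of_forall (hR : IsPresentation n R) {i : Fin d}
    (h : ∀ r ∈ relationsAvoiding R i, sval n r.1 ∈ Apery n (n i) → tlen r.1 = tlen r.2) :
    HomogSet n (Apery n (n i)) := by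
  refine hR.homogSet_of_forall (summandClosed_apery n (n i)) fun r hr hr_apery => ?_
  refine h r ⟨hr, ?_, ?_⟩ hr_apery <;> by_contra hri
  · exact sval_notMem_apery hri hr_apery
  · exact sval_notMem_apery hri (hR.sval_eq hr ▸ hr_apery)

theorem IsPresentation.homogSet_apery_of_tlen_eq (hR : IsPresentation n R) {i : Fin d}
    {u v : Fin d → ℕ} (hi : relationsAvoiding R i = {(u, v)}) (huv : tlen u = tlen v) :
    HomogSet n (Apery n (n i)) :=
  hR.homogSet_apery_of_forall (by simpa [hi] using fun _ => huv)

theorem IsPresentation.homogSet_apery_iff (hR : IsPresentation n R) (hn : ∀ i, 0 < n i)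
    {i : Fin d} {u v : Fin d → ℕ} (hi : relationsAvoiding R i = {(u, v)}) :
    HomogSet n (Apery n (n i)) ↔ HomogSet n ({sval n u} ∩ Apery n (n i)) := by
  refine ⟨fun h => h.mono Set.inter_subset_right, fun h => hR.homogSet_apery_of_forall ?_⟩
  have huv : (u, v) ∈ relationsAvoiding R i := by rw [hi]; rfl
  rw [hi]
  rintro _ rfl hu
  exact h.tlen_eq hn ⟨rfl, hu⟩ (hR.sval_eq huv.1)

end Homogeneity

section Komeda

/-- The exponents of Komeda's binomials `f₁, …, f₅`; the variables `x₁, …, x₄` have the indices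
`0, …, 3`. -/
def komedaRelations (c1 c2 c3 c4 c21 : ℕ) : Set ((Fin 4 → ℕ) × (Fin 4 → ℕ)) :=
  {(Pi.single 0 c1, Pi.single 2 1 + Pi.single 3 (c4 - 1)),
    (Pi.single 1 c2, Pi.single 0 c21 + Pi.single 3 1),
    (Pi.single 2 c3, Pi.single 0 (c1 - c21 - 1) + Pi.single 1 1),
    (Pi.single 3 c4, Pi.single 0 1 + Pi.single 1 (c2 - 1) + Pi.single 2 (c3 - 1)),
    (Pi.single 2 (c3 - 1) + Pi.single 0 (c21 + 1), Pi.single 1 1 + Pi.single 3 (c4 - 1))}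

variable {n : Fin 4 → ℕ} {c1 c2 c3 c4 c21 : ℕ}

lemma relationsAvoiding_komeda_zero (hc1 : 0 < c1) (hc21 : 0 < c21) (hc : 0 < c1 - c21 - 1) :
    relationsAvoiding (komedaRelations c1 c2 c3 c4 c21) 0 = ∅ := by
  refine Set.eq_empty_of_forall_notMem ?_
  rintro r ⟨rfl | rfl | rfl | rfl | rfl, h⟩ <;> simp at h <;> omega

lemma relationsAvoiding_komeda_one (hc2 : 1 < c2) :
    relationsAvoiding (komedaRelations c1 c2 c3 c4 c21) 1 =
      {(Pi.single 0 c1, Pi.single 2 1 + Pi.single 3 (c4 - 1))} := by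
  refine Set.Subset.antisymm ?_ (by simp [relationsAvoiding, komedaRelations])
  rintro r ⟨rfl | rfl | rfl | rfl | rfl, h⟩ <;> simp at h ⊢ <;> omega

lemma relationsAvoiding_komeda_two (hc3 : 1 < c3) :
    relationsAvoiding (komedaRelations c1 c2 c3 c4 c21) 2 =
      {(Pi.single 1 c2, Pi.single 0 c21 + Pi.single 3 1)} := by
  refine Set.Subset.antisymm ?_ (by simp [relationsAvoiding, komedaRelations])
  rintro r ⟨rfl | rfl | rfl | rfl | rfl, h⟩ <;> simp at h ⊢ <;> omega

lemma relationsAvoiding_komeda_three (hc4 : 1 < c4) :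
    relationsAvoiding (komedaRelations c1 c2 c3 c4 c21) 3 =
      {(Pi.single 2 c3, Pi.single 0 (c1 - c21 - 1) + Pi.single 1 1)} := by
  refine Set.Subset.antisymm ?_ (by simp [relationsAvoiding, komedaRelations])
  rintro r ⟨rfl | rfl | rfl | rfl | rfl, h⟩ <;> simp at h ⊢ <;> omega

lemma MinGen.komeda_exponent_bounds (hmin : MinGen n) (hinj : Function.Injective n)
    (hR : IsPresentation n (komedaRelations c1 c2 c3 c4 c21)) (hc21 : 0 < c21)
    (hc21lt : c21 < c1) : 0 < c1 - c21 - 1 ∧ 1 < c2 ∧ 1 < c3 ∧ 1 < c4 := by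
  have f1 := hR.sval_eq (Or.inl rfl)
  have f2 := hR.sval_eq (Or.inr (Or.inl rfl))
  have f3 := hR.sval_eq (Or.inr (Or.inr (Or.inl rfl)))
  rw [sval_single] at f1 f2 f3
  have c1_sub_pos : 0 < c1 - c21 - 1 := by
    by_contra h
    have n1_eq : n 1 = c3 * n 2 := by
      simpa [Nat.eq_zero_of_not_pos h, sval_single] using f3.symm
    obtain rfl := hmin.eq_one_of_eq_mul n1_eq
    exact absurd (hinj (n1_eq.trans (one_mul _))) (by decide)
  refine ⟨c1_sub_pos, hmin.one_lt_of_mul_eq_sval f2 ?_, hmin.one_lt_of_mul_eq_sval f3 ?_, ?_⟩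
  · simpa [tlen_add, tlen_single] using hc21
  · simpa [tlen_add, tlen_single] using c1_sub_pos
  · by_contra h
    have n2_eq : n 2 = c1 * n 0 := by
      simpa [Nat.sub_eq_zero_of_le (not_lt.1 h), sval_single] using f1.symm
    have := hmin.eq_one_of_eq_mul n2_eq
    omega

end Komeda

theorem statement10_general (k : Type*) [CommRing k] [Nontrivial k] (n : Fin 4 → ℕ)
    (hinj : Function.Injective n) (hmin : MinGen n) (c1 c2 c3 c4 c21 : ℕ)
    (hc21 : 0 < c21) (hc21lt : c21 < c1)
    (hI : toricIdeal k n = binomialIdeal k (komedaRelations c1 c2 c3 c4 c21)) :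
    HomogSet n (Apery n (n 0)) ∧
    ((HomogSet n (Apery n (n 1)) ↔
        HomogSet n (({c1 * n 0} : Set ℕ) ∩ Apery n (n 1))) ∧
      (HomogSet n (Apery n (n 2)) ↔
        HomogSet n (({c2 * n 1} : Set ℕ) ∩ Apery n (n 2))) ∧
      (HomogSet n (Apery n (n 3)) ↔
        HomogSet n (({c3 * n 2} : Set ℕ) ∩ Apery n (n 3)))) ∧
    ((tlen (Pi.single 0 c1 : Fin 4 → ℕ) =
        tlen (Pi.single 2 1 + Pi.single 3 (c4 - 1) : Fin 4 → ℕ) →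
        HomogSet n (Apery n (n 1))) ∧
      (tlen (Pi.single 1 c2 : Fin 4 → ℕ) =
        tlen (Pi.single 0 c21 + Pi.single 3 1 : Fin 4 → ℕ) →
        HomogSet n (Apery n (n 2))) ∧
      (tlen (Pi.single 2 c3 : Fin 4 → ℕ) =
        tlen (Pi.single 0 (c1 - c21 - 1) + Pi.single 1 1 : Fin 4 → ℕ) →
        HomogSet n (Apery n (n 3)))) := by
  have hR := isPresentation_of_toricIdeal_eq k hI
  obtain ⟨hc, hc2, hc3, hc4⟩ := hmin.komeda_exponent_bounds hinj hR hc21 hc21lt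
  have avoiding_zero := relationsAvoiding_komeda_zero
    (c2 := c2) (c3 := c3) (c4 := c4) (hc21.trans hc21lt) hc21 hc
  simp only [← sval_single n]
  exact ⟨hR.homogSet_apery_of_forall (by simp [avoiding_zero]),
    ⟨hR.homogSet_apery_iff hmin.pos (relationsAvoiding_komeda_one hc2),
      hR.homogSet_apery_iff hmin.pos (relationsAvoiding_komeda_two hc3),
      hR.homogSet_apery_iff hmin.pos (relationsAvoiding_komeda_three hc4)⟩,
    hR.homogSet_apery_of_tlen_eq (relationsAvoiding_komeda_one hc2),
    hR.homogSet_apery_of_tlen_eq (relationsAvoiding_komeda_two hc3),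
    hR.homogSet_apery_of_tlen_eq (relationsAvoiding_komeda_three hc4)⟩

/-- for a pseudo-symmetric numerical semigroup of embedding
dimension 4 with Komeda's presentation, `AP(S,n₁)` is homogeneous; for
`i = 2,3,4`, `AP(S,nᵢ)` is homogeneous iff `{c_{i-1}·n_{i-1}} ∩ AP(S,nᵢ)` is
homogeneous; and if `f_{i-1}` is homogeneous then `AP(S,nᵢ)` is homogeneous. -/
theorem statement10 (k : Type*) [Field k] (n : Fin 4 → ℕ)
    (hpos : ∀ i, 0 < n i) (hinj : Function.Injective n)
    (hnum : IsNumerical n) (hmin : MinGen n) (hps : IsPseudoSymmetric n)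
    (c1 c2 c3 c4 c21 : ℕ) (hc1 : 0 < c1) (hc2 : 0 < c2) (hc3 : 0 < c3)
    (hc4 : 0 < c4) (hc21 : 0 < c21) (hc21lt : c21 < c1)
    (hI : toricIdeal k n = Ideal.span
      {monom k (Pi.single 0 c1) -
         monom k (Pi.single 2 1 + Pi.single 3 (c4 - 1)),
       monom k (Pi.single 1 c2) -
         monom k (Pi.single 0 c21 + Pi.single 3 1),
       monom k (Pi.single 2 c3) -
         monom k (Pi.single 0 (c1 - c21 - 1) + Pi.single 1 1),
       monom k (Pi.single 3 c4) -
         monom k (Pi.single 0 1 + Pi.single 1 (c2 - 1) + Pi.single 2 (c3 - 1)),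
       monom k (Pi.single 2 (c3 - 1) + Pi.single 0 (c21 + 1)) -
         monom k (Pi.single 1 1 + Pi.single 3 (c4 - 1))}) :
    HomogSet n (Apery n (n 0)) ∧
    ((HomogSet n (Apery n (n 1)) ↔
        HomogSet n (({c1 * n 0} : Set ℕ) ∩ Apery n (n 1))) ∧
      (HomogSet n (Apery n (n 2)) ↔
        HomogSet n (({c2 * n 1} : Set ℕ) ∩ Apery n (n 2))) ∧
      (HomogSet n (Apery n (n 3)) ↔
        HomogSet n (({c3 * n 2} : Set ℕ) ∩ Apery n (n 3)))) ∧
    ((tlen (Pi.single 0 c1 : Fin 4 → ℕ) =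
        tlen (Pi.single 2 1 + Pi.single 3 (c4 - 1) : Fin 4 → ℕ) →
        HomogSet n (Apery n (n 1))) ∧
      (tlen (Pi.single 1 c2 : Fin 4 → ℕ) =
        tlen (Pi.single 0 c21 + Pi.single 3 1 : Fin 4 → ℕ) →
        HomogSet n (Apery n (n 2))) ∧
      (tlen (Pi.single 2 c3 : Fin 4 → ℕ) =
        tlen (Pi.single 0 (c1 - c21 - 1) + Pi.single 1 1 : Fin 4 → ℕ) →
        HomogSet n (Apery n (n 3)))) := by
  exact statement10_general k n hinj hmin c1 c2 c3 c4 c21 hc21 hc21lt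
    (by simpa only [binomialIdeal, komedaRelations, Set.image_insert_eq,
      Set.image_singleton] using hI)
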